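/- For every f(s) = ∑_{n=1}^∞ a_n n^{-s} with ∑ |a_n|² < ∞, the limit lim_{T→∞} (1/T) ∫_0^T |f(1/2 + it)|² dt exists and equals ∑_{n=1}^∞ |a_n|² n^{-1}. -/

import Mathlib

open MeasureTheory Filter Complex Real

/-! For a Dirichlet polynomial the mean value is Parseval's identity for the characters `n ^ (-it)`,
which are orthogonal in the mean. To pass to the boundary function, majorize the indicator of
`[0, T]` by a Gaussian: for `T ≥ 1` and `σ ≥ 1 / 2` the resulting quadratic form in the coefficients
is dominated by the kernel `min n m / max n m ^ 2`, whose row sums are bounded, so Schur's test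
gives `(1 / T) ∫₀ᵀ |∑ aₙ n ^ (-σ - it)|² dt ≤ C ∑ |aₙ|²` with `C` independent of `T`. Applied to
tails, with Fatou's lemma as the length of the sum grows and then as `σ ↓ 1 / 2`, this shows that
the `N`-th partial sum approximates the boundary function in the normalized `L²` norm on `[0, T]`
uniformly in `T ≥ 1`; hence the limits `T → ∞` and `N → ∞` may be interchanged. -/

open Finset (range)
open scoped ComplexConjugate ENNReal ProbabilityTheory Topology

section ExponentialSums

variable {ι : Type*}

/-- The exponential sum `∑ cₙ exp (-i λₙ t)` with frequencies `λₙ = freq n`. The sign is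
chosen so that `λₙ = log n` gives the Dirichlet polynomials on a vertical line. -/
noncomputable def expSum (freq : ι → ℝ) (c : ι → ℂ) (S : Finset ι) (t : ℝ) : ℂ :=
  ∑ n ∈ S, c n * cexp (-(I * freq n * t))

variable (freq : ι → ℝ) (c : ι → ℂ) (S : Finset ι)

lemma continuous_expSum : Continuous (expSum freq c S) := by
  unfold expSum
  fun_prop

lemma norm_sq_expSum (t : ℝ) :
    ((‖expSum freq c S t‖ ^ 2 : ℝ) : ℂ) =
      ∑ n ∈ S, ∑ m ∈ S, c n * conj (c m) * cexp (I * (freq m - freq n : ℝ) * t) := by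
  rw [← normSq_eq_norm_sq, ← mul_conj, expSum, map_sum, Finset.sum_mul_sum]
  refine Finset.sum_congr rfl fun n _ ↦ Finset.sum_congr rfl fun m _ ↦ ?_
  rw [map_mul, ← exp_conj, mul_mul_mul_comm, ← Complex.exp_add]
  simp only [map_neg, map_mul, conj_I, conj_ofReal]
  congr 2
  push_cast
  ring

lemma tendsto_mean_cexp (ξ : ℝ) :
    Tendsto (fun T : ℝ ↦ ((1 / T : ℝ) : ℂ) * ∫ t in (0 : ℝ)..T, cexp (I * ξ * t)) atTop
      (𝓝 (if ξ = 0 then 1 else 0)) := by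
  split_ifs with hξ
  · refine tendsto_const_nhds.congr' ?_
    filter_upwards [eventually_ne_atTop 0] with T hT
    simp [hξ, hT]
  · have hc : I * (ξ : ℂ) ≠ 0 := mul_ne_zero I_ne_zero (ofReal_ne_zero.2 hξ)
    have hlim : Tendsto (fun T : ℝ ↦ 1 / T * (2 / |ξ|)) atTop (𝓝 0) := by
      simpa using (tendsto_inv_atTop_zero (𝕜 := ℝ)).mul_const (2 / |ξ|)
    refine squeeze_zero_norm' ?_ hlim
    filter_upwards [eventually_gt_atTop 0] with T hT
    have hunit (x : ℝ) : ‖cexp (I * ξ * x)‖ = 1 := by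
      simpa [mul_comm, mul_left_comm] using norm_exp_ofReal_mul_I (ξ * x)
    have hnum : ‖cexp (I * ξ * T) - cexp (I * ξ * (0 : ℝ))‖ ≤ 2 :=
      (norm_sub_le _ _).trans (by rw [hunit, hunit]; norm_num)
    rw [integral_exp_mul_complex hc, norm_mul, norm_div, norm_real,
      Real.norm_of_nonneg (by positivity), norm_mul, norm_I, one_mul, norm_real, Real.norm_eq_abs]
    gcongr

variable {freq c S} in
lemma tendsto_mean_norm_sq_expSum (hfreq : Set.InjOn freq {n | n ∈ S ∧ c n ≠ 0}) :
    Tendsto (fun T : ℝ ↦ 1 / T * ∫ t in (0 : ℝ)..T, ‖expSum freq c S t‖ ^ 2) atTop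
      (𝓝 (∑ n ∈ S, ‖c n‖ ^ 2)) := by
  classical
  have hdiag (n) (hn : n ∈ S) : ((‖c n‖ ^ 2 : ℝ) : ℂ) =
      ∑ m ∈ S, c n * conj (c m) * (if freq m - freq n = 0 then 1 else 0) := by
    rw [Finset.sum_eq_single_of_mem n hn, if_pos (sub_self _), mul_one, mul_conj,
      normSq_eq_norm_sq]
    intro m hm hmn
    by_cases hcn : c n = 0
    · simp [hcn]
    by_cases hcm : c m = 0
    · simp [hcm]
    rw [if_neg fun h ↦ hmn (hfreq ⟨hm, hcm⟩ ⟨hn, hcn⟩ (sub_eq_zero.1 h)), mul_zero]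
  have hexpand (T : ℝ) :
      ((1 / T * ∫ t in (0 : ℝ)..T, ‖expSum freq c S t‖ ^ 2 : ℝ) : ℂ) =
        ∑ n ∈ S, ∑ m ∈ S, c n * conj (c m) *
          ((1 / T : ℝ) * ∫ t in (0 : ℝ)..T, cexp (I * (freq m - freq n : ℝ) * t)) := by
    rw [ofReal_mul, ← intervalIntegral.integral_ofReal]
    simp_rw [norm_sq_expSum]
    rw [intervalIntegral.integral_finsetSum
      fun n _ ↦ Continuous.intervalIntegrable (by fun_prop) _ _, Finset.mul_sum]
    refine Finset.sum_congr rfl fun n _ ↦ ?_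
    rw [intervalIntegral.integral_finsetSum
      fun m _ ↦ Continuous.intervalIntegrable (by fun_prop) _ _, Finset.mul_sum]
    refine Finset.sum_congr rfl fun m _ ↦ ?_
    rw [intervalIntegral.integral_const_mul, mul_left_comm]
  rw [← tendsto_ofReal_iff, ofReal_sum, Finset.sum_congr rfl hdiag]
  simp_rw [hexpand]
  exact tendsto_finsetSum _ fun n _ ↦ tendsto_finsetSum _ fun m _ ↦
    (tendsto_mean_cexp _).const_mul _

lemma integrable_cexp_mul_gaussian {T : ℝ} (hT : T ≠ 0) (ξ : ℝ) :
    Integrable fun t : ℝ ↦ cexp (I * ξ * t) * (rexp (-(t / T) ^ 2) : ℝ) := by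
  have hb : 0 < ((T⁻¹ ^ 2 : ℝ) : ℂ).re := by rw [ofReal_re]; positivity
  refine (integrable_cexp_quadratic hb (I * ξ) 0).congr (ae_of_all _ fun t ↦ ?_)
  dsimp only
  rw [ofReal_exp, ← Complex.exp_add]
  push_cast
  ring_nf

lemma integral_cexp_mul_gaussian {T : ℝ} (hT : 0 < T) (ξ : ℝ) :
    ∫ t : ℝ, cexp (I * ξ * t) * (rexp (-(t / T) ^ 2) : ℝ) =
      (T * √π * rexp (-(T * ξ) ^ 2 / 4) : ℝ) := by
  have hb : 0 < ((T⁻¹ ^ 2 : ℝ) : ℂ).re := by rw [ofReal_re]; positivity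
  have hgauss (t : ℝ) : ((rexp (-(t / T) ^ 2) : ℝ) : ℂ) = cexp (-((T⁻¹ ^ 2 : ℝ) : ℂ) * t ^ 2) := by
    push_cast
    ring_nf
  have hscale : ((π : ℂ) / ((T⁻¹ ^ 2 : ℝ) : ℂ)) ^ (1 / 2 : ℂ) = (T * √π : ℝ) := by
    rw [← ofReal_div, show (1 / 2 : ℂ) = ((1 / 2 : ℝ) : ℂ) by norm_num,
      ← ofReal_cpow (by positivity), ← Real.sqrt_eq_rpow,
      show π / T⁻¹ ^ 2 = T ^ 2 * π by field_simp, Real.sqrt_mul (by positivity),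
      Real.sqrt_sq hT.le]
  have hT' : (T : ℂ) ≠ 0 := ofReal_ne_zero.2 hT.ne'
  simp_rw [hgauss]
  rw [fourierIntegral_gaussian hb, hscale, ofReal_mul _ (rexp _), ofReal_exp]
  congr 2
  push_cast
  field_simp

lemma norm_sq_expSum_mul (w : ℝ → ℝ) (t : ℝ) :
    ((‖expSum freq c S t‖ ^ 2 * w t : ℝ) : ℂ) =
      ∑ n ∈ S, ∑ m ∈ S, c n * conj (c m) * (cexp (I * (freq m - freq n : ℝ) * t) * w t) := by
  simp_rw [ofReal_mul _ (w t), norm_sq_expSum, Finset.sum_mul, mul_assoc]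

lemma integrable_norm_sq_expSum_mul_gaussian {T : ℝ} (hT : T ≠ 0) :
    Integrable fun t : ℝ ↦ ‖expSum freq c S t‖ ^ 2 * rexp (-(t / T) ^ 2) := by
  have hcomplex : Integrable fun t : ℝ ↦
      ((‖expSum freq c S t‖ ^ 2 * rexp (-(t / T) ^ 2) : ℝ) : ℂ) := by
    simp_rw [norm_sq_expSum_mul freq c S fun t ↦ rexp (-(t / T) ^ 2)]
    exact integrable_finsetSum _ fun n _ ↦ integrable_finsetSum _ fun m _ ↦
      (integrable_cexp_mul_gaussian hT _).const_mul _
  simpa only [RCLike.re_to_complex, ofReal_re] using hcomplex.re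

lemma integral_norm_sq_expSum_mul_gaussian {T : ℝ} (hT : 0 < T) :
    ((∫ t : ℝ, ‖expSum freq c S t‖ ^ 2 * rexp (-(t / T) ^ 2) : ℝ) : ℂ) =
      ∑ n ∈ S, ∑ m ∈ S, c n * conj (c m) *
        (T * √π * rexp (-(T * (freq m - freq n)) ^ 2 / 4) : ℝ) := by
  have hint (n m : ι) := (integrable_cexp_mul_gaussian hT.ne' (freq m - freq n)).const_mul
    (c n * conj (c m))
  rw [← integral_complex_ofReal]
  simp_rw [norm_sq_expSum_mul freq c S fun t ↦ rexp (-(t / T) ^ 2)]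
  rw [integral_finsetSum _ fun n _ ↦ integrable_finsetSum _ fun m _ ↦ hint n m]
  refine Finset.sum_congr rfl fun n _ ↦ ?_
  rw [integral_finsetSum _ fun m _ ↦ hint n m]
  refine Finset.sum_congr rfl fun m _ ↦ ?_
  rw [integral_const_mul, integral_cexp_mul_gaussian hT]

lemma integral_norm_sq_expSum_mul_gaussian_le {T : ℝ} (hT : 0 < T) :
    ∫ t : ℝ, ‖expSum freq c S t‖ ^ 2 * rexp (-(t / T) ^ 2) ≤
      T * √π * ∑ n ∈ S, ∑ m ∈ S, ‖c n‖ * ‖c m‖ * rexp (-(T * (freq m - freq n)) ^ 2 / 4) := by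
  refine (le_abs_self _).trans ?_
  rw [← Real.norm_eq_abs, ← norm_real, integral_norm_sq_expSum_mul_gaussian _ _ _ hT,
    Finset.mul_sum]
  refine norm_sum_le_of_le _ fun n _ ↦ ?_
  rw [Finset.mul_sum]
  refine norm_sum_le_of_le _ fun m _ ↦ le_of_eq ?_
  rw [norm_mul, norm_mul, RCLike.norm_conj, norm_real, Real.norm_of_nonneg (by positivity)]
  ring

-- The Gaussian `exp (1 - (t / T) ^ 2)` majorizes the indicator function of `[0, T]`.
lemma intervalIntegral_norm_sq_expSum_le {T : ℝ} (hT : 0 < T) :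
    ∫ t in (0 : ℝ)..T, ‖expSum freq c S t‖ ^ 2 ≤ rexp 1 * (T * √π *
      ∑ n ∈ S, ∑ m ∈ S, ‖c n‖ * ‖c m‖ * rexp (-(T * (freq m - freq n)) ^ 2 / 4)) := by
  have hint := (integrable_norm_sq_expSum_mul_gaussian freq c S hT.ne').const_mul (rexp 1)
  calc ∫ t in (0 : ℝ)..T, ‖expSum freq c S t‖ ^ 2
      ≤ ∫ t in Set.Ioc 0 T, rexp 1 * (‖expSum freq c S t‖ ^ 2 * rexp (-(t / T) ^ 2)) := by
        rw [intervalIntegral.integral_of_le hT.le]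
        refine setIntegral_mono_on (((continuous_expSum freq c S).norm.pow 2).intervalIntegrable
          0 T).1 hint.integrableOn measurableSet_Ioc fun t ht ↦ ?_
        rw [mul_left_comm, ← Real.exp_add]
        refine le_mul_of_one_le_right (by positivity) (Real.one_le_exp ?_)
        have : (t / T) ^ 2 ≤ 1 :=
          pow_le_one₀ (div_nonneg ht.1.le hT.le) ((div_le_one hT).2 ht.2)
        linarith
    _ ≤ ∫ t, rexp 1 * (‖expSum freq c S t‖ ^ 2 * rexp (-(t / T) ^ 2)) :=
        setIntegral_le_integral hint (ae_of_all _ fun t ↦ by positivity)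
    _ ≤ _ := by
        rw [integral_const_mul]
        gcongr
        exact integral_norm_sq_expSum_mul_gaussian_le freq c S hT

end ExponentialSums

-- Symmetric form of Schur's test: `2 xₙ xₘ ≤ xₙ² + xₘ²`.
lemma sum_sum_mul_mul_le_of_sum_le {ι : Type*} {S : Finset ι} {K : ι → ι → ℝ} {B : ℝ}
    (hnonneg : ∀ n m, 0 ≤ K n m) (hsymm : ∀ n m, K n m = K m n)
    (hrow : ∀ n ∈ S, ∑ m ∈ S, K n m ≤ B) (x : ι → ℝ) :
    ∑ n ∈ S, ∑ m ∈ S, x n * x m * K n m ≤ B * ∑ n ∈ S, x n ^ 2 := by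
  have hswap : ∑ n ∈ S, ∑ m ∈ S, x m ^ 2 * K n m = ∑ n ∈ S, ∑ m ∈ S, x n ^ 2 * K n m := by
    rw [Finset.sum_comm]
    simp_rw [hsymm]
  calc ∑ n ∈ S, ∑ m ∈ S, x n * x m * K n m
      ≤ ∑ n ∈ S, ∑ m ∈ S, (x n ^ 2 * K n m + x m ^ 2 * K n m) / 2 := by
        gcongr with n _ m _
        nlinarith [mul_nonneg (sq_nonneg (x n - x m)) (hnonneg n m)]
    _ = ∑ n ∈ S, x n ^ 2 * ∑ m ∈ S, K n m := by
        simp_rw [← Finset.sum_div, Finset.sum_add_distrib, Finset.mul_sum]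
        rw [hswap, add_self_div_two]
    _ ≤ ∑ n ∈ S, x n ^ 2 * B := by
        gcongr with n hn
        exact hrow n hn
    _ = B * ∑ n ∈ S, x n ^ 2 := by rw [← Finset.sum_mul, mul_comm]

lemma sum_min_div_max_sq_le (n : ℕ) (S : Finset ℕ) :
    ∑ m ∈ S, min (n : ℝ) m / max (n : ℝ) m ^ 2 ≤ 2 := by
  rcases n.eq_zero_or_pos with rfl | hn
  · simp
  have hn' : (0 : ℝ) < n := Nat.cast_pos.2 hn
  set M := max n (S.sup id) with hM
  have hsub : S ⊆ insert 0 (Finset.Ioc 0 M) := fun m hm ↦ by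
    have : m ≤ S.sup id := Finset.le_sup (f := id) hm
    simp only [Finset.mem_insert, Finset.mem_Ioc]
    omega
  have hbelow (m) (hm : m ∈ Finset.Ioc 0 n) : min (n : ℝ) m / max (n : ℝ) m ^ 2 ≤ 1 / n := by
    have hmn : (m : ℝ) ≤ n := Nat.cast_le.2 (Finset.mem_Ioc.1 hm).2
    rw [min_eq_right hmn, max_eq_left hmn, div_le_div_iff₀ (by positivity) hn']
    nlinarith
  have habove (m) (hm : m ∈ Finset.Ioc n M) :
      min (n : ℝ) m / max (n : ℝ) m ^ 2 = n * ((m : ℝ) ^ 2)⁻¹ := by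
    have hnm : (n : ℝ) ≤ m := Nat.cast_le.2 (Finset.mem_Ioc.1 hm).1.le
    rw [min_eq_left hnm, max_eq_right hnm, div_eq_mul_inv]
  calc ∑ m ∈ S, min (n : ℝ) m / max (n : ℝ) m ^ 2
      ≤ ∑ m ∈ insert 0 (Finset.Ioc 0 M), min (n : ℝ) m / max (n : ℝ) m ^ 2 :=
        Finset.sum_le_sum_of_subset_of_nonneg hsub fun _ _ _ ↦ by positivity
    _ = ∑ m ∈ Finset.Ioc 0 n, min (n : ℝ) m / max (n : ℝ) m ^ 2 +
          ∑ m ∈ Finset.Ioc n M, min (n : ℝ) m / max (n : ℝ) m ^ 2 := by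
        rw [Finset.sum_insert (by simp),
          Finset.sum_Ioc_consecutive _ n.zero_le (le_max_left _ _), ← hM]
        simp
    _ ≤ ∑ m ∈ Finset.Ioc 0 n, 1 / (n : ℝ) + n * ∑ m ∈ Finset.Ioc n M, ((m : ℝ) ^ 2)⁻¹ := by
        rw [Finset.sum_congr rfl habove, ← Finset.mul_sum]
        exact add_le_add (Finset.sum_le_sum hbelow) le_rfl
    _ ≤ 1 + n * ((n : ℝ)⁻¹ - (M : ℝ)⁻¹) := by
        gcongr
        · simp [hn'.ne']
        · exact sum_Ioc_inv_sq_le_sub hn.ne' (le_max_left _ _)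
    _ ≤ 2 := by
        rw [mul_sub, mul_inv_cancel₀ hn'.ne']
        have : 0 ≤ (n : ℝ) * (M : ℝ)⁻¹ := by positivity
        linarith

-- With `u = |log y - log x|` this is `0 ≤ (u / 2 - 3 / 2) ^ 2`.
lemma exp_neg_sq_log_sub_log_le {x y : ℝ} (hx : 0 < x) (hy : 0 < y) :
    rexp (-(Real.log y - Real.log x) ^ 2 / 4) ≤
      rexp (9 / 4) * (√x * √y * (min x y / max x y ^ 2)) := by
  wlog hxy : x ≤ y generalizing x y
  · simpa only [min_comm, max_comm, mul_comm √y, sub_sq_comm (Real.log x)]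
      using this hy hx (le_of_not_ge hxy)
  have hsqrt {z : ℝ} (hz : 0 < z) : √z = rexp (Real.log z / 2) := by
    rw [Real.exp_half, Real.exp_log hz]
  have hquot : x / y ^ 2 = rexp (Real.log x - 2 * Real.log y) := by
    rw [Real.exp_sub, Real.exp_log hx, two_mul, Real.exp_add, Real.exp_log hy, sq]
  rw [min_eq_left hxy, max_eq_right hxy, hsqrt hx, hsqrt hy, hquot, ← Real.exp_add,
    ← Real.exp_add, ← Real.exp_add]
  gcongr
  nlinarith [sq_nonneg ((Real.log y - Real.log x) / 2 - 3 / 2)]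

section DirichletPolynomials

lemma term_re_add_mul_I (a : ℕ → ℂ) (σ t : ℝ) (n : ℕ) :
    LSeries.term a (σ + t * I) n =
      LSeries.term a σ n * cexp (-(I * (Real.log n : ℝ) * t)) := by
  rcases eq_or_ne n 0 with rfl | hn
  · simp
  have hn' : (n : ℂ) ≠ 0 := Nat.cast_ne_zero.2 hn
  rw [LSeries.term_of_ne_zero hn, LSeries.term_of_ne_zero hn, cpow_add _ _ hn', Complex.exp_neg,
    cpow_def_of_ne_zero hn' (t * I), natCast_log, ← div_eq_mul_inv, div_div]
  ring_nf

lemma sum_term_eq_expSum (a : ℕ → ℂ) (σ : ℝ) (S : Finset ℕ) (t : ℝ) :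
    ∑ n ∈ S, LSeries.term a (σ + t * I) n =
      expSum (fun n : ℕ ↦ Real.log n) (LSeries.term a σ) S t :=
  Finset.sum_congr rfl fun n _ ↦ term_re_add_mul_I a σ t n

lemma continuous_sum_term (a : ℕ → ℂ) (S : Finset ℕ) :
    Continuous fun s ↦ ∑ n ∈ S, LSeries.term a s n := by
  refine continuous_finsetSum _ fun n _ ↦ ?_
  rcases eq_or_ne n 0 with rfl | hn
  · simpa using continuous_const
  · have hn' : (n : ℂ) ≠ 0 := Nat.cast_ne_zero.2 hn
    simp only [LSeries.term_of_ne_zero hn]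
    exact continuous_const.div (Continuous.const_cpow continuous_id (Or.inl hn'))
      fun s ↦ cpow_ne_zero_iff.2 (Or.inl hn')

lemma norm_term_le_div_sqrt (a : ℕ → ℂ) {s : ℂ} (hs : 1 / 2 ≤ s.re) (n : ℕ) :
    ‖LSeries.term a s n‖ ≤ ‖a n‖ / √n := by
  have hhalf : ((1 / 2 : ℝ) : ℂ).re ≤ s.re := by rwa [ofReal_re]
  refine (LSeries.norm_term_le_of_re_le_re a hhalf n).trans ?_
  rw [LSeries.norm_term_eq, ofReal_re, Real.sqrt_eq_rpow]
  split_ifs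
  · positivity
  · rfl

lemma norm_sq_term_half (a : ℕ → ℂ) (n : ℕ) :
    ‖LSeries.term a (1 / 2 : ℝ) n‖ ^ 2 = ‖a n‖ ^ 2 * (n : ℝ)⁻¹ := by
  rcases eq_or_ne n 0 with rfl | hn
  · simp
  · rw [LSeries.norm_term_eq, if_neg hn, ofReal_re, ← Real.sqrt_eq_rpow, div_pow,
      Real.sq_sqrt n.cast_nonneg, div_eq_mul_inv]

lemma summable_norm_sq_term_half {a : ℕ → ℂ} (ha : Summable fun n ↦ ‖a n‖ ^ 2) :
    Summable fun n ↦ ‖LSeries.term a (1 / 2 : ℝ) n‖ ^ 2 := by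
  refine ha.of_nonneg_of_le (fun n ↦ by positivity) fun n ↦ ?_
  rw [norm_sq_term_half]
  exact mul_le_of_le_one_right (by positivity) n.cast_inv_le_one

lemma LSeriesHasSum_iff_hasSum_succ {a : ℕ → ℂ} {s z : ℂ} :
    LSeriesHasSum a s z ↔ HasSum (fun n ↦ a (n + 1) * ((n + 1 : ℕ) : ℂ) ^ (-s)) z := by
  rw [LSeriesHasSum, ← hasSum_nat_add_iff' 1, Finset.sum_range_one, LSeries.term_zero, sub_zero]
  simp_rw [LSeries.term_of_ne_zero (Nat.succ_ne_zero _), cpow_neg, div_eq_mul_inv]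

lemma tendsto_mean_norm_sq_sum_term (a : ℕ → ℂ) (S : Finset ℕ) (σ : ℝ) :
    Tendsto (fun T : ℝ ↦ 1 / T * ∫ t in (0 : ℝ)..T, ‖∑ n ∈ S, LSeries.term a (σ + t * I) n‖ ^ 2)
      atTop (𝓝 (∑ n ∈ S, ‖LSeries.term a σ n‖ ^ 2)) := by
  simp_rw [sum_term_eq_expSum]
  have hpos {n : ℕ} (h : LSeries.term a σ n ≠ 0) : (0 : ℝ) < n := by
    refine Nat.cast_pos.2 (Nat.pos_of_ne_zero ?_)
    rintro rfl
    exact h (LSeries.term_zero _ _)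
  exact tendsto_mean_norm_sq_expSum fun n hn m hm h ↦
    Nat.cast_injective (Real.log_injOn_pos (hpos hn.2) (hpos hm.2) h)

/-- A constant `C` in the local embedding `∫₀ᵀ |f(1/2 + it)|² dt ≤ C T ‖f‖²`, `T ≥ 1`, of `𝓗²`: the
factors come from the Gaussian majorant, its integral and Schur's test. -/
noncomputable def localEmbeddingConst : ℝ := rexp 1 * (√π * (rexp (9 / 4) * 2))

lemma localEmbeddingConst_pos : 0 < localEmbeddingConst := by
  unfold localEmbeddingConst
  positivity

lemma norm_term_mul_norm_term_mul_exp_le (a : ℕ → ℂ) {σ T : ℝ} (hσ : 1 / 2 ≤ σ) (hT : 1 ≤ T)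
    (n m : ℕ) :
    ‖LSeries.term a σ n‖ * ‖LSeries.term a σ m‖ *
        rexp (-(T * (Real.log m - Real.log n)) ^ 2 / 4) ≤
      rexp (9 / 4) * (‖a n‖ * ‖a m‖ * (min (n : ℝ) m / max (n : ℝ) m ^ 2)) := by
  rcases n.eq_zero_or_pos with rfl | hn
  · simp
  rcases m.eq_zero_or_pos with rfl | hm
  · simp
  have hn' : (0 : ℝ) < n := Nat.cast_pos.2 hn
  have hm' : (0 : ℝ) < m := Nat.cast_pos.2 hm
  have hexp : rexp (-(T * (Real.log m - Real.log n)) ^ 2 / 4) ≤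
      rexp (-(Real.log m - Real.log n) ^ 2 / 4) := by
    rw [mul_pow]
    gcongr
    exact le_mul_of_one_le_left (sq_nonneg _) (one_le_pow₀ hT)
  have hterm (k : ℕ) : ‖LSeries.term a σ k‖ ≤ ‖a k‖ / √k :=
    norm_term_le_div_sqrt a (by rwa [ofReal_re]) k
  calc _ ≤ ‖a n‖ / √n * (‖a m‖ / √m) *
        (rexp (9 / 4) * (√n * √m * (min (n : ℝ) m / max (n : ℝ) m ^ 2))) := by
        gcongr
        · exact hterm n
        · exact hterm m
        · exact hexp.trans (exp_neg_sq_log_sub_log_le hn' hm')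
    _ = _ := by
        have := (Real.sqrt_pos.2 hn').ne'
        have := (Real.sqrt_pos.2 hm').ne'
        field_simp

lemma intervalIntegral_norm_sq_sum_term_le (a : ℕ → ℂ) (S : Finset ℕ) {σ T : ℝ}
    (hσ : 1 / 2 ≤ σ) (hT : 1 ≤ T) :
    ∫ t in (0 : ℝ)..T, ‖∑ n ∈ S, LSeries.term a (σ + t * I) n‖ ^ 2 ≤
      localEmbeddingConst * T * ∑ n ∈ S, ‖a n‖ ^ 2 := by
  have hT' : 0 < T := one_pos.trans_le hT
  simp_rw [sum_term_eq_expSum]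
  calc _ ≤ rexp 1 * (T * √π * ∑ n ∈ S, ∑ m ∈ S, ‖LSeries.term a σ n‖ * ‖LSeries.term a σ m‖ *
          rexp (-(T * (Real.log m - Real.log n)) ^ 2 / 4)) :=
        intervalIntegral_norm_sq_expSum_le _ _ S hT'
    _ ≤ rexp 1 * (T * √π * (rexp (9 / 4) * ∑ n ∈ S, ∑ m ∈ S,
          ‖a n‖ * ‖a m‖ * (min (n : ℝ) m / max (n : ℝ) m ^ 2))) := by
        simp_rw [Finset.mul_sum (a := rexp (9 / 4))]
        gcongr rexp 1 * (T * √π * ∑ n ∈ S, ∑ m ∈ S, ?_) with n _ m _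
        exact norm_term_mul_norm_term_mul_exp_le a hσ hT n m
    _ ≤ rexp 1 * (T * √π * (rexp (9 / 4) * (2 * ∑ n ∈ S, ‖a n‖ ^ 2))) := by
        gcongr
        exact sum_sum_mul_mul_le_of_sum_le (fun _ _ ↦ by positivity)
          (fun _ _ ↦ by rw [min_comm, max_comm]) (fun n _ ↦ sum_min_div_max_sq_le n S) _
    _ = localEmbeddingConst * T * ∑ n ∈ S, ‖a n‖ ^ 2 := by
        rw [localEmbeddingConst]
        ring

end DirichletPolynomials

section MeanSquare

lemma integral_cond_Ioc {E : Type*} [NormedAddCommGroup E] [NormedSpace ℝ E] {T : ℝ} (hT : 0 < T)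
    (g : ℝ → E) : ∫ t, g t ∂volume[|Set.Ioc 0 T] = (1 / T) • ∫ t in (0 : ℝ)..T, g t := by
  rw [ProbabilityTheory.cond, integral_smul_measure, intervalIntegral.integral_of_le hT.le,
    Real.volume_Ioc, sub_zero, ENNReal.toReal_inv, ENNReal.toReal_ofReal hT.le, one_div]

lemma lpNorm_two_sq {α E : Type*} [MeasurableSpace α] [NormedAddCommGroup E] {μ : Measure α}
    {g : α → E} (hg : AEStronglyMeasurable g μ) :
    lpNorm g 2 μ ^ 2 = ∫ x, ‖g x‖ ^ 2 ∂μ := by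
  have hnonneg : 0 ≤ ∫ x, ‖g x‖ ^ 2 ∂μ := integral_nonneg fun _ ↦ by positivity
  rw [lpNorm_eq_integral_norm_rpow_toReal two_ne_zero ENNReal.ofNat_ne_top hg]
  simp only [ENNReal.toReal_ofNat, Real.rpow_two]
  rw [← Real.rpow_two, Real.rpow_inv_rpow hnonneg two_ne_zero]

lemma abs_lpNorm_sub_lpNorm_le {α E : Type*} [MeasurableSpace α] [NormedAddCommGroup E]
    {μ : Measure α} {p : ℝ≥0∞} {g h : α → E} (hg : MemLp g p μ) (hh : MemLp h p μ) (hp : 1 ≤ p) :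
    |lpNorm g p μ - lpNorm h p μ| ≤ lpNorm (g - h) p μ :=
  abs_sub_le_iff.2 ⟨sub_le_iff_le_add'.2 (lpNorm_le_lpNorm_add_lpNorm_sub' hh hp),
    sub_le_iff_le_add'.2 (lpNorm_le_lpNorm_add_lpNorm_sub hg hp)⟩

lemma memLp_cond_Ioc_of_continuous {E : Type*} [NormedAddCommGroup E] {g : ℝ → E}
    (hg : Continuous g) {T : ℝ} (hT : 0 < T) :
    MemLp g 2 (volume[|Set.Ioc 0 T]) := by
  refine MemLp.smul_measure ?_ (by simpa using hT)
  rw [memLp_two_iff_integrable_sq_norm hg.aestronglyMeasurable]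
  exact ((hg.norm.pow 2).intervalIntegrable 0 T).1

lemma memLp_sum_term (a : ℕ → ℂ) (S : Finset ℕ) (σ : ℝ) {T : ℝ} (hT : 0 < T) :
    MemLp (fun t : ℝ ↦ ∑ n ∈ S, LSeries.term a (σ + t * I) n) 2 (volume[|Set.Ioc 0 T]) :=
  memLp_cond_Ioc_of_continuous ((continuous_sum_term a S).comp (by fun_prop)) hT

lemma eLpNorm_sum_term_le (a : ℕ → ℂ) (S : Finset ℕ) {σ T : ℝ} (hσ : 1 / 2 ≤ σ) (hT : 1 ≤ T) :
    eLpNorm (fun t : ℝ ↦ ∑ n ∈ S, LSeries.term a (σ + t * I) n) 2 (volume[|Set.Ioc 0 T]) ≤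
      ENNReal.ofReal √(localEmbeddingConst * ∑ n ∈ S, ‖a n‖ ^ 2) := by
  have hT' : 0 < T := one_pos.trans_le hT
  have hmem := memLp_sum_term a S σ hT'
  rw [← ofReal_lpNorm hmem]
  refine ENNReal.ofReal_le_ofReal (Real.le_sqrt_of_sq_le ?_)
  rw [lpNorm_two_sq hmem.aestronglyMeasurable, integral_cond_Ioc hT', smul_eq_mul,
    one_div_mul_eq_div, div_le_iff₀' hT', ← mul_assoc, mul_comm T]
  exact intervalIntegral_norm_sq_sum_term_le a S hσ hT

lemma eLpNorm_sub_sum_term_le {a : ℕ → ℂ} (ha : Summable fun n ↦ ‖a n‖ ^ 2) {σ T : ℝ}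
    (hσ : 1 / 2 ≤ σ) (hT : 1 ≤ T) {F : ℝ → ℂ} (hF : ∀ t : ℝ, LSeriesHasSum a (σ + t * I) (F t))
    (N : ℕ) :
    eLpNorm (fun t ↦ F t - ∑ n ∈ range N, LSeries.term a (σ + t * I) n) 2
        (volume[|Set.Ioc 0 T]) ≤
      ENNReal.ofReal √(localEmbeddingConst * ∑' k, ‖a (k + N)‖ ^ 2) := by
  have htail (M : ℕ) : ∑ n ∈ Finset.Ico N M, ‖a n‖ ^ 2 ≤ ∑' k, ‖a (k + N)‖ ^ 2 := by
    rw [Finset.sum_Ico_eq_sum_range]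
    simp_rw [add_comm N]
    exact ((summable_nat_add_iff N).2 ha).sum_le_tsum _ fun _ _ ↦ by positivity
  refine Lp.eLpNorm_le_of_ae_tendsto (u := atTop)
    (f := fun M (t : ℝ) ↦ ∑ n ∈ Finset.Ico N M, LSeries.term a (σ + t * I) n)
    (Eventually.of_forall fun M ↦ (eLpNorm_sum_term_le a (Finset.Ico N M) hσ hT).trans ?_)
    (fun M ↦ (memLp_sum_term a _ σ (one_pos.trans_le hT)).aestronglyMeasurable)
    (ae_of_all _ fun t ↦ ?_)
  · have := localEmbeddingConst_pos.le
    gcongr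
    exact htail M
  · refine ((hF t).tendsto_sum_nat.sub_const _).congr' ?_
    filter_upwards [eventually_ge_atTop N] with M hM
    exact (Finset.sum_Ico_eq_sub _ hM).symm

lemma aestronglyMeasurable_of_LSeriesHasSum {a : ℕ → ℂ} {σ : ℝ} {F : ℝ → ℂ}
    (hF : ∀ t : ℝ, LSeriesHasSum a (σ + t * I) (F t)) (μ : Measure ℝ) :
    AEStronglyMeasurable F μ :=
  aestronglyMeasurable_of_tendsto_ae atTop
    (fun N ↦ ((continuous_sum_term a (range N)).comp (by fun_prop :
      Continuous fun t : ℝ ↦ (σ + t * I : ℂ))).aestronglyMeasurable)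
    (ae_of_all _ fun t ↦ (hF t).tendsto_sum_nat)

variable {a : ℕ → ℂ} {f : ℂ → ℂ} {fb : ℝ → ℂ}

lemma aestronglyMeasurable_boundary (hf : ∀ s : ℂ, 1 / 2 < s.re → LSeriesHasSum a s (f s))
    (hfb : ∀ᵐ t : ℝ, Tendsto (fun σ : ℝ ↦ f (σ + t * I)) (𝓝[>] (1 / 2)) (𝓝 (fb t))) :
    AEStronglyMeasurable fb := by
  obtain ⟨σ, -, hσ, hlim⟩ := exists_seq_strictAnti_tendsto_nhdsWithin (1 / 2 : ℝ)
  refine aestronglyMeasurable_of_tendsto_ae (f := fun k (t : ℝ) ↦ f (σ k + t * I)) atTop (fun k ↦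
    aestronglyMeasurable_of_LSeriesHasSum (fun t ↦ hf (σ k + t * I) (by simpa using hσ k)) _) ?_
  filter_upwards [hfb] with t ht
  exact ht.comp hlim

lemma eLpNorm_boundary_sub_sum_term_le (ha : Summable fun n ↦ ‖a n‖ ^ 2)
    (hf : ∀ s : ℂ, 1 / 2 < s.re → LSeriesHasSum a s (f s))
    (hfb : ∀ᵐ t : ℝ, Tendsto (fun σ : ℝ ↦ f (σ + t * I)) (𝓝[>] (1 / 2)) (𝓝 (fb t)))
    {T : ℝ} (hT : 1 ≤ T) (N : ℕ) :
    eLpNorm (fun t ↦ fb t - ∑ n ∈ range N, LSeries.term a ((1 / 2 : ℝ) + t * I) n) 2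
        (volume[|Set.Ioc 0 T]) ≤
      ENNReal.ofReal √(localEmbeddingConst * ∑' k, ‖a (k + N)‖ ^ 2) := by
  obtain ⟨σ, -, hσ, hlim⟩ := exists_seq_strictAnti_tendsto_nhdsWithin (1 / 2 : ℝ)
  have hseries (k : ℕ) (t : ℝ) : LSeriesHasSum a (σ k + t * I) (f (σ k + t * I)) :=
    hf _ (by simpa using hσ k)
  refine Lp.eLpNorm_le_of_ae_tendsto (u := atTop)
    (f := fun k (t : ℝ) ↦ f (σ k + t * I) - ∑ n ∈ range N, LSeries.term a (σ k + t * I) n)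
    (Eventually.of_forall fun k ↦ eLpNorm_sub_sum_term_le ha (hσ k).le hT (hseries k) N)
    (fun k ↦ (aestronglyMeasurable_of_LSeriesHasSum (hseries k) _).sub
      (memLp_sum_term a _ (σ k) (one_pos.trans_le hT)).aestronglyMeasurable) ?_
  filter_upwards [ProbabilityTheory.cond_absolutelyContinuous.ae_le hfb] with t ht
  have hline : Continuous fun x : ℝ ↦ (x + t * I : ℂ) := by fun_prop
  exact (ht.comp hlim).sub ((((continuous_sum_term a (range N)).comp hline).tendsto _).comp
    (hlim.mono_right nhdsWithin_le_nhds))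

lemma memLp_boundary (ha : Summable fun n ↦ ‖a n‖ ^ 2)
    (hf : ∀ s : ℂ, 1 / 2 < s.re → LSeriesHasSum a s (f s))
    (hfb : ∀ᵐ t : ℝ, Tendsto (fun σ : ℝ ↦ f (σ + t * I)) (𝓝[>] (1 / 2)) (𝓝 (fb t)))
    {T : ℝ} (hT : 1 ≤ T) :
    MemLp fb 2 (volume[|Set.Ioc 0 T]) := by
  have hbound := eLpNorm_boundary_sub_sum_term_le ha hf hfb hT 0
  simp only [Finset.range_zero, Finset.sum_empty, sub_zero] at hbound
  exact ⟨(aestronglyMeasurable_boundary hf hfb).mono_ac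
    ProbabilityTheory.cond_absolutelyContinuous, hbound.trans_lt ENNReal.ofReal_lt_top⟩

lemma abs_lpNorm_boundary_sub_lpNorm_sum_term_le (ha : Summable fun n ↦ ‖a n‖ ^ 2)
    (hf : ∀ s : ℂ, 1 / 2 < s.re → LSeriesHasSum a s (f s))
    (hfb : ∀ᵐ t : ℝ, Tendsto (fun σ : ℝ ↦ f (σ + t * I)) (𝓝[>] (1 / 2)) (𝓝 (fb t)))
    {T : ℝ} (hT : 1 ≤ T) (N : ℕ) :
    |lpNorm fb 2 (volume[|Set.Ioc 0 T]) -
        lpNorm (fun t : ℝ ↦ ∑ n ∈ range N, LSeries.term a ((1 / 2 : ℝ) + t * I) n) 2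
          (volume[|Set.Ioc 0 T])| ≤
      √(localEmbeddingConst * ∑' k, ‖a (k + N)‖ ^ 2) := by
  have hfbL := memLp_boundary ha hf hfb hT
  have hsumL := memLp_sum_term a (range N) (1 / 2) (one_pos.trans_le hT)
  refine (abs_lpNorm_sub_lpNorm_le hfbL hsumL one_le_two).trans ?_
  rw [← ENNReal.ofReal_le_ofReal_iff (Real.sqrt_nonneg _), ofReal_lpNorm (hfbL.sub hsumL)]
  exact eLpNorm_boundary_sub_sum_term_le ha hf hfb hT N

lemma tendsto_lpNorm_sum_term (a : ℕ → ℂ) (S : Finset ℕ) (σ : ℝ) :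
    Tendsto (fun T : ℝ ↦ lpNorm (fun t : ℝ ↦ ∑ n ∈ S, LSeries.term a (σ + t * I) n) 2
      (volume[|Set.Ioc 0 T])) atTop (𝓝 √(∑ n ∈ S, ‖LSeries.term a σ n‖ ^ 2)) := by
  refine (tendsto_mean_norm_sq_sum_term a S σ).sqrt.congr' ?_
  filter_upwards [eventually_gt_atTop 0] with T hT
  rw [← smul_eq_mul, ← integral_cond_Ioc hT,
    ← lpNorm_two_sq (memLp_sum_term a S σ hT).aestronglyMeasurable, Real.sqrt_sq lpNorm_nonneg]

lemma tendsto_lpNorm_boundary (ha : Summable fun n ↦ ‖a n‖ ^ 2)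
    (hf : ∀ s : ℂ, 1 / 2 < s.re → LSeriesHasSum a s (f s))
    (hfb : ∀ᵐ t : ℝ, Tendsto (fun σ : ℝ ↦ f (σ + t * I)) (𝓝[>] (1 / 2)) (𝓝 (fb t))) :
    Tendsto (fun T : ℝ ↦ lpNorm fb 2 (volume[|Set.Ioc 0 T])) atTop
      (𝓝 √(∑' n, ‖LSeries.term a (1 / 2 : ℝ) n‖ ^ 2)) := by
  have htail : Tendsto (fun N ↦ √(localEmbeddingConst * ∑' k, ‖a (k + N)‖ ^ 2)) atTop (𝓝 0) := by
    simpa using ((tendsto_sum_nat_add fun k ↦ ‖a k‖ ^ 2).const_mul localEmbeddingConst).sqrt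
  have hunif : TendstoUniformlyOn (fun N T ↦ lpNorm (fun t : ℝ ↦
      ∑ n ∈ range N, LSeries.term a ((1 / 2 : ℝ) + t * I) n) 2 (volume[|Set.Ioc 0 T]))
      (fun T ↦ lpNorm fb 2 (volume[|Set.Ioc 0 T])) atTop (Set.Ici (1 : ℝ)) := by
    rw [Metric.tendstoUniformlyOn_iff]
    intro ε hε
    filter_upwards [htail.eventually_lt_const hε] with N hN T hT
    exact (abs_lpNorm_boundary_sub_lpNorm_sum_term_le ha hf hfb hT N).trans_lt hN
  have hunif_atTop :=
    hunif.tendstoUniformlyOnFilter.mono_right (le_principal_iff.2 (Ici_mem_atTop 1))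
  exact hunif_atTop.tendsto_of_eventually_tendsto
    (Eventually.of_forall fun N ↦ tendsto_lpNorm_sum_term a (range N) (1 / 2))
    (summable_norm_sq_term_half ha).hasSum.tendsto_sum_nat.sqrt

lemma tendsto_mean_norm_sq_boundary (ha : Summable fun n ↦ ‖a n‖ ^ 2)
    (hf : ∀ s : ℂ, 1 / 2 < s.re → LSeriesHasSum a s (f s))
    (hfb : ∀ᵐ t : ℝ, Tendsto (fun σ : ℝ ↦ f (σ + t * I)) (𝓝[>] (1 / 2)) (𝓝 (fb t))) :
    Tendsto (fun T : ℝ ↦ 1 / T * ∫ t in (0 : ℝ)..T, ‖fb t‖ ^ 2) atTop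
      (𝓝 (∑' n, ‖LSeries.term a (1 / 2 : ℝ) n‖ ^ 2)) := by
  have hlim := (tendsto_lpNorm_boundary ha hf hfb).pow 2
  rw [Real.sq_sqrt (tsum_nonneg fun n ↦ by positivity)] at hlim
  refine hlim.congr' ?_
  filter_upwards [eventually_ge_atTop 1] with T hT
  rw [lpNorm_two_sq (memLp_boundary ha hf hfb hT).aestronglyMeasurable,
    integral_cond_Ioc (one_pos.trans_le hT), smul_eq_mul]

end MeanSquare

/-- For every `f ∈ 𝓗²` (a Dirichlet series with square-summable coefficients), with
a.e. boundary values `fb` on the critical line `Re s = 1/2`, the means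
`(1/T) ∫_0^T |f(1/2+it)|² dt` converge to `∑ |aₙ|² n^{-1}`. -/
theorem H2_mean_square_on_critical_line (a : ℕ → ℂ) (f : ℂ → ℂ) (fb : ℝ → ℂ)
    (ha : Summable (fun n : ℕ => ‖a (n + 1)‖ ^ 2))
    (hrep : ∀ s : ℂ, (1 / 2 : ℝ) < s.re →
      HasSum (fun n : ℕ => a (n + 1) * ((n + 1 : ℕ) : ℂ) ^ (-s)) (f s))
    (hfb : ∀ᵐ t : ℝ ∂volume,
      Tendsto (fun σ : ℝ => f (σ + t * I)) (nhdsWithin (1 / 2) (Set.Ioi (1 / 2)))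
        (nhds (fb t))) :
    Tendsto (fun T : ℝ => (1 / T) * ∫ t in (0:ℝ)..T, ‖fb t‖ ^ 2)
      atTop (nhds (∑' n : ℕ, ‖a (n + 1)‖ ^ 2 * ((n + 1 : ℕ) : ℝ)⁻¹)) := by
  have ha' : Summable fun n ↦ ‖a n‖ ^ 2 := (summable_nat_add_iff 1).1 ha
  have hf (s : ℂ) (hs : 1 / 2 < s.re) : LSeriesHasSum a s (f s) :=
    LSeriesHasSum_iff_hasSum_succ.2 (hrep s hs)
  have hlimit : ∑' n, ‖LSeries.term a (1 / 2 : ℝ) n‖ ^ 2 =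
      ∑' n : ℕ, ‖a (n + 1)‖ ^ 2 * ((n + 1 : ℕ) : ℝ)⁻¹ := by
    rw [(summable_norm_sq_term_half ha').tsum_eq_zero_add]
    simp_rw [norm_sq_term_half]
    simp
  rw [← hlimit]
  exact tendsto_mean_norm_sq_boundary ha' hf hfb
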